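/- Let τ ∈ ℝ_{<0}. There exists a meromorphic function on ℂ, again denoted G_τ, which agrees with G_τ(z) = exp(i·γ_τ(z)) on the strip |Re(z)| < 1 − τ^{-1} and satisfies G_τ(z+2) = 2·cos(π(z+1)τ/2)·G_τ(z) on all of ℂ. Moreover the zeros of this meromorphic function are located exactly at the points 1 − τ^{-1} + 2k + 2τ^{-1}l with k ∈ ℤ_{≥0} and l ∈ ℤ_{≤0}, and its poles are located exactly at the points −1 + τ^{-1} + 2k + 2τ^{-1}l with k ∈ ℤ_{≤0} and l ∈ ℤ_{≥0}. -/

import Mathlib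

noncomputable section

open Complex MeasureTheory Set Filter Topology

/-- The integrand of Ruijsenaars' hyperbolic gamma function. -/
def hypInt (τ : ℝ) (z : ℂ) (y : ℝ) : ℂ :=
  (z / (y : ℂ) -
      Complex.sinh ((τ : ℂ) * (y : ℂ) * z) /
        (Complex.sinh (y : ℂ) * Complex.sinh ((τ : ℂ) * (y : ℂ)))) / (y : ℂ)

/-- `γ_τ(z) = (1/(2i))·∫_0^∞ ( z/y − sinh(τyz)/(sinh(y)·sinh(τy)) ) dy/y`. -/
def hypGammaArg (τ : ℝ) (z : ℂ) : ℂ :=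
  (2 * Complex.I)⁻¹ * ∫ y in Set.Ioi (0 : ℝ), hypInt τ z y

/-- `G_τ(z) = exp(i·γ_τ(z))` on the strip `|Re z| < 1 − τ⁻¹`. -/
def hypGammaStrip (τ : ℝ) (z : ℂ) : ℂ := Complex.exp (Complex.I * hypGammaArg τ z)

/-- The zero set `1 − τ⁻¹ + 2ℤ_{≥0} + 2τ⁻¹ℤ_{≤0}` of the hyperbolic gamma function. -/
def hypZeros (τ : ℝ) : Set ℂ :=
  {z : ℂ | ∃ k l : ℤ, 0 ≤ k ∧ l ≤ 0 ∧
    z = 1 - ((τ : ℂ))⁻¹ + 2 * (k : ℂ) + 2 * ((τ : ℂ))⁻¹ * (l : ℂ)}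

/-- The pole set `−1 + τ⁻¹ + 2ℤ_{≤0} + 2τ⁻¹ℤ_{≥0}` of the hyperbolic gamma function. -/
def hypPoles (τ : ℝ) : Set ℂ :=
  {z : ℂ | ∃ k l : ℤ, k ≤ 0 ∧ 0 ≤ l ∧
    z = -1 + ((τ : ℂ))⁻¹ + 2 * (k : ℂ) + 2 * ((τ : ℂ))⁻¹ * (l : ℂ)}

lemma hypInt_neg (a : ℝ) (z : ℂ) (y : ℝ) : hypInt (-a) z y = hypInt a z y := by
  unfold hypInt
  simp only [Complex.ofReal_neg, neg_mul, Complex.sinh_neg, mul_neg, neg_div_neg_eq]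

lemma csinh_sub_bound (u : ℂ) : ‖Complex.sinh u - u‖ ≤ ‖u‖ ^ 3 * Real.exp ‖u‖ := by
  have h1 := Complex.norm_exp_sub_sum_le_norm_mul_exp u 3
  have h2 := Complex.norm_exp_sub_sum_le_norm_mul_exp (-u) 3
  simp only [Finset.sum_range_succ, Finset.sum_range_zero, norm_neg] at h1 h2
  norm_num [Nat.factorial] at h1 h2
  have e : Complex.sinh u - u = ((Complex.exp u - (1 + u + u ^ 2 / 2)) -
      (Complex.exp (-u) - (1 + -u + u ^ 2 / 2))) / 2 := by
    rw [Complex.sinh]; ring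
  rw [e, norm_div]
  have h3 := norm_sub_le (Complex.exp u - (1 + u + u ^ 2 / 2))
      (Complex.exp (-u) - (1 + -u + u ^ 2 / 2))
  norm_num
  linarith

lemma rsinh_le (u : ℝ) (hu : 0 ≤ u) : Real.sinh u ≤ u + u ^ 3 * Real.exp u := by
  have h := csinh_sub_bound (u : ℂ)
  rw [← Complex.ofReal_sinh, ← Complex.ofReal_sub, Complex.norm_real, Complex.norm_real,
    Real.norm_eq_abs, Real.norm_eq_abs, abs_of_nonneg hu] at h
  have := le_abs_self (Real.sinh u - u)
  linarith

lemma le_rsinh (u : ℝ) (hu : 0 ≤ u) : u ≤ Real.sinh u := Real.self_le_sinh_iff.2 hu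

lemma norm_csinh_le (u : ℂ) : ‖Complex.sinh u‖ ≤ Real.exp |u.re| := by
  rw [Complex.sinh, norm_div]
  have h3 := norm_sub_le (Complex.exp u) (Complex.exp (-u))
  rw [Complex.norm_exp, Complex.norm_exp] at h3
  have h1 : Real.exp u.re ≤ Real.exp |u.re| := Real.exp_le_exp.2 (le_abs_self _)
  have h2 : Real.exp (-u).re ≤ Real.exp |u.re| := Real.exp_le_exp.2 (by simpa using neg_le_abs _)
  norm_num
  linarith

lemma rsinh_ge_exp (a y : ℝ) (ha : 0 < a) (hy : 1 ≤ y) :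
    (1 - Real.exp (-2 * a)) / 2 * Real.exp (a * y) ≤ Real.sinh (a * y) := by
  rw [Real.sinh_eq]
  have h : Real.exp (-(a*y)) ≤ Real.exp (-2*a) * Real.exp (a*y) := by
    rw [← Real.exp_add]; apply Real.exp_le_exp.2; nlinarith
  linarith

lemma hypInt_bound_small (a R : ℝ) (ha : 0 < a) (hR : 0 ≤ R) : ∃ C : ℝ, ∀ z : ℂ, ‖z‖ ≤ R →
    ∀ y : ℝ, 0 < y → y ≤ 1 → ‖hypInt a z y‖ ≤ C := by
  refine ⟨R * ((a ^ 3 * Real.exp a + a * Real.exp 1 + a ^ 3 * Real.exp a * Real.exp 1) / a)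
    + (a * R) ^ 3 * Real.exp (a * R) / a, ?_⟩
  intro z hz y hy hy1
  have hay : 0 < a * y := mul_pos ha hy
  have s1 := le_rsinh y hy.le
  have s2 := le_rsinh (a * y) hay.le
  have p1 : 0 < Real.sinh y := by linarith
  have p2 : 0 < Real.sinh (a * y) := by linarith
  have e : hypInt a z y =
      z * (((1 / y - a * y / (Real.sinh y * Real.sinh (a * y))) / y : ℝ) : ℂ) -
      (Complex.sinh (a * y * z) - a * y * z) /
        ((y * Real.sinh y * Real.sinh (a * y) : ℝ) : ℂ) := by
    unfold hypInt
    have q1 : ((Real.sinh y : ℝ) : ℂ) ≠ 0 := by exact_mod_cast p1.ne'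
    have q2 : ((Real.sinh (a * y) : ℝ) : ℂ) ≠ 0 := by exact_mod_cast p2.ne'
    have q3 : (y : ℂ) ≠ 0 := by exact_mod_cast hy.ne'
    push_cast at q1 q2 ⊢
    field_simp
    ring
  rw [e]
  have hprod : a * y ^ 2 ≤ Real.sinh y * Real.sinh (a * y) := by
    nlinarith [mul_le_mul s1 s2 hay.le p1.le]
  have pp : 0 < Real.sinh y * Real.sinh (a * y) := mul_pos p1 p2
  have ay2 : 0 < a * y ^ 2 := by positivity
  have hD0 : 0 ≤ (1 / y - a * y / (Real.sinh y * Real.sinh (a * y))) / y := by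
    apply div_nonneg _ hy.le
    rw [sub_nonneg, div_le_div_iff₀ pp hy]
    nlinarith
  have hD1 : (1 / y - a * y / (Real.sinh y * Real.sinh (a * y))) / y ≤
      (a ^ 3 * Real.exp a + a * Real.exp 1 + a ^ 3 * Real.exp a * Real.exp 1) / a := by
    have e1 : (1 / y - a * y / (Real.sinh y * Real.sinh (a * y))) / y =
      (Real.sinh y * Real.sinh (a * y) - a * y ^ 2) /
        (y ^ 2 * (Real.sinh y * Real.sinh (a * y))) := by
      field_simp
    rw [e1]
    have u1 : Real.sinh y ≤ y + y ^ 3 * Real.exp 1 := (rsinh_le y hy.le).trans (by gcongr)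
    have u2 : Real.sinh (a * y) ≤ a * y + a ^ 3 * y ^ 3 * Real.exp a :=
      (rsinh_le (a*y) hay.le).trans (by
        rw [mul_pow]
        gcongr
        nlinarith)
    have u3 : Real.sinh y * Real.sinh (a * y) - a * y ^ 2 ≤
        (a ^ 3 * Real.exp a + a * Real.exp 1 + a ^ 3 * Real.exp a * Real.exp 1) * y ^ 4 := by
      have := mul_le_mul u1 u2 p2.le (by positivity)
      have h6 : y ^ 6 ≤ y ^ 4 := pow_le_pow_of_le_one hy.le hy1 (by norm_num)
      have h7 : a ^ 3 * Real.exp a * Real.exp 1 * y ^ 6 ≤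
        a ^ 3 * Real.exp a * Real.exp 1 * y ^ 4 := by gcongr
      nlinarith
    calc _ ≤ ((a ^ 3 * Real.exp a + a * Real.exp 1 + a ^ 3 * Real.exp a * Real.exp 1) * y ^ 4) /
        (y ^ 2 * (a * y ^ 2)) := by gcongr
      _ = _ := by field_simp
  refine (norm_sub_le _ _).trans (add_le_add ?_ ?_)
  · rw [norm_mul, Complex.norm_real, Real.norm_eq_abs, abs_of_nonneg hD0]
    gcongr
  · rw [norm_div, Complex.norm_real, Real.norm_eq_abs, abs_of_pos (by positivity)]
    have hn : ‖(a * y * z : ℂ)‖ ≤ a * y * R := by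
      rw [norm_mul, norm_mul, Complex.norm_real, Complex.norm_real, Real.norm_eq_abs,
        Real.norm_eq_abs, abs_of_pos ha, abs_of_pos hy]
      gcongr
    have hn2 : ‖(a * y * z : ℂ)‖ ≤ a * R := hn.trans (by
      have : a * R * y ≤ a * R * 1 := by gcongr
      linarith)
    calc _ ≤ ((a * y * R) ^ 3 * Real.exp (a * R)) / (y * (a * y ^ 2)) := by
          rw [mul_assoc y]
          gcongr
          refine (csinh_sub_bound _).trans ?_
          gcongr
      _ = _ := by field_simp

lemma hypInt_bound_large (a R r : ℝ) (ha : 0 < a) :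
    ∃ C : ℝ, ∀ z : ℂ, ‖z‖ ≤ R → |z.re| ≤ r →
    ∀ y : ℝ, 1 ≤ y → ‖hypInt a z y‖ ≤ R * y ^ (-2 : ℝ) + C * Real.exp (-(1 + a - a * r) * y) := by
  have c1 : 0 < (1 - Real.exp (-2 * 1)) / 2 := by
    have : Real.exp (-2 * 1) < 1 := Real.exp_lt_one_iff.2 (by norm_num)
    exact half_pos (sub_pos.2 this)
  have c2 : 0 < (1 - Real.exp (-2 * a)) / 2 := by
    have : Real.exp (-2 * a) < 1 := Real.exp_lt_one_iff.2 (by linarith)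
    linarith
  set k1 := (1 - Real.exp (-2 * 1)) / 2 with hk1
  set k2 := (1 - Real.exp (-2 * a)) / 2 with hk2
  refine ⟨1 / (k1 * k2), ?_⟩
  intro z hz hzr y hy
  have hy0 : 0 < y := by linarith
  have s1 := rsinh_ge_exp 1 y one_pos hy
  have s2 := rsinh_ge_exp a y ha hy
  rw [one_mul] at s1
  rw [← hk1] at s1
  rw [← hk2] at s2
  have e : hypInt a z y = z / ((y ^ 2 : ℝ) : ℂ) -
     Complex.sinh (a * y * z) / ((y * (Real.sinh y * Real.sinh (a * y)) : ℝ) : ℂ) := by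
    unfold hypInt
    have q3 : (y : ℂ) ≠ 0 := by exact_mod_cast hy0.ne'
    push_cast
    rw [sub_div, div_div, div_div]
    ring_nf
  rw [e]
  have p1 : 0 < Real.sinh y := lt_of_lt_of_le (by positivity) s1
  have p2 : 0 < Real.sinh (a * y) := lt_of_lt_of_le (by positivity) s2
  refine (norm_sub_le _ _).trans (add_le_add ?_ ?_)
  · rw [norm_div, Complex.norm_real, Real.norm_eq_abs, abs_of_pos (by positivity),
      Real.rpow_neg hy0.le, div_eq_mul_inv]
    norm_num
    gcongr
  · rw [norm_div, Complex.norm_real, Real.norm_eq_abs, abs_of_pos (by positivity)]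
    have hs : ‖Complex.sinh (a * y * z)‖ ≤ Real.exp (a * y * r) := by
      refine (norm_csinh_le _).trans ?_
      apply Real.exp_le_exp.2
      have : (a * y * z : ℂ).re = a * y * z.re := by
        rw [← Complex.ofReal_mul, Complex.re_ofReal_mul]
      rw [this, abs_mul, abs_of_pos (by positivity : 0 < a * y)]
      gcongr
    calc _ ≤ Real.exp (a * y * r) / (1 * ((k1 * Real.exp y) * (k2 * Real.exp (a * y)))) := by
          gcongr
      _ = 1 / (k1 * k2) * (Real.exp (a * y * r) / (Real.exp y * Real.exp (a * y))) := by
          field_simp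
      _ = _ := by
          rw [← Real.exp_add, ← Real.exp_sub]
          ring_nf

lemma hypInt_bound (a R r : ℝ) (ha : 0 < a) (hR : 0 ≤ R) (har : a * r < 1 + a) :
    ∃ b : ℝ → ℝ, Integrable b (volume.restrict (Ioi 0)) ∧ ∀ z : ℂ, ‖z‖ ≤ R → |z.re| ≤ r →
    ∀ y : ℝ, 0 < y → ‖hypInt a z y‖ ≤ b y := by
  obtain ⟨C1, h1⟩ := hypInt_bound_small a R ha hR
  obtain ⟨C2, h2⟩ := hypInt_bound_large a R r ha
  refine ⟨fun y => (Ioc (0:ℝ) 1).indicator (fun _ => C1) y + (Ioi (1:ℝ)).indicator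
    (fun y => R * y ^ (-2 : ℝ) + C2 * Real.exp (-(1 + a - a * r) * y)) y, ?_, ?_⟩
  · apply Integrable.integrableOn
    apply Integrable.add
    · rw [integrable_indicator_iff measurableSet_Ioc]
      simp
    · rw [integrable_indicator_iff measurableSet_Ioi]
      apply Integrable.add
      · exact (integrableOn_Ioi_rpow_of_lt (by norm_num) one_pos).const_mul R
      · exact (exp_neg_integrableOn_Ioi 1 (by linarith)).const_mul C2
  · intro z hz hzr y hy
    by_cases hy1 : y ≤ 1
    · simpa [indicator, hy, hy1, not_lt.2 hy1] using h1 z hz y hy hy1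
    · simpa [indicator, hy, hy1, not_le.1 hy1] using h2 z hz hzr y (not_le.1 hy1).le

/-- The `z`-derivative of the integrand. -/
def hypIntD (a : ℝ) (z : ℂ) (y : ℝ) : ℂ :=
  (1 / (y : ℂ) -
      (a : ℂ) * (y : ℂ) * Complex.cosh ((a : ℂ) * (y : ℂ) * z) /
        (Complex.sinh (y : ℂ) * Complex.sinh ((a : ℂ) * (y : ℂ)))) / (y : ℂ)

lemma hypInt_hasDerivAt (a : ℝ) (y : ℝ) (z : ℂ) :
    HasDerivAt (fun z => hypInt a z y) (hypIntD a z y) z := by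
  unfold hypInt hypIntD
  have h1 : HasDerivAt (fun z : ℂ => (a : ℂ) * (y : ℂ) * z) ((a : ℂ) * (y : ℂ)) z := by
    simpa using (hasDerivAt_id z).const_mul ((a : ℂ) * (y : ℂ))
  have h2 := h1.csinh
  have h3 := (((hasDerivAt_id z).div_const (y:ℂ)).sub (h2.div_const
    (Complex.sinh (y : ℂ) * Complex.sinh ((a : ℂ) * (y : ℂ))))).div_const (y:ℂ)
  refine h3.congr_deriv ?_
  ring

lemma csinh_ofReal_ne (y : ℝ) (hy : 0 < y) : Complex.sinh (y : ℂ) ≠ 0 := by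
  rw [← Complex.ofReal_sinh]
  exact_mod_cast (Real.sinh_pos_iff.2 hy).ne'

lemma hypInt_meas (a : ℝ) (ha : 0 < a) (z : ℂ) :
    AEStronglyMeasurable (hypInt a z) (volume.restrict (Ioi 0)) := by
  apply ContinuousOn.aestronglyMeasurable _ measurableSet_Ioi
  unfold hypInt
  have h0 : ∀ y ∈ Ioi (0:ℝ), (y:ℂ) ≠ 0 := fun y hy => by exact_mod_cast (ne_of_gt hy)
  apply ContinuousOn.div _ (by fun_prop) h0
  apply ContinuousOn.sub
  · exact ContinuousOn.div (by fun_prop) (by fun_prop) h0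
  · apply ContinuousOn.div (by fun_prop) (by fun_prop)
    intro y hy
    refine mul_ne_zero (csinh_ofReal_ne y hy) ?_
    rw [← Complex.ofReal_mul]
    exact csinh_ofReal_ne _ (mul_pos ha hy)

lemma hypIntD_meas (a : ℝ) (ha : 0 < a) (z : ℂ) :
    AEStronglyMeasurable (hypIntD a z) (volume.restrict (Ioi 0)) := by
  apply ContinuousOn.aestronglyMeasurable _ measurableSet_Ioi
  unfold hypIntD
  have h0 : ∀ y ∈ Ioi (0:ℝ), (y:ℂ) ≠ 0 := fun y hy => by exact_mod_cast (ne_of_gt hy)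
  apply ContinuousOn.div _ (by fun_prop) h0
  apply ContinuousOn.sub
  · exact ContinuousOn.div (by fun_prop) (by fun_prop) h0
  · apply ContinuousOn.div (by fun_prop) (by fun_prop)
    intro y hy
    refine mul_ne_zero (csinh_ofReal_ne y hy) ?_
    rw [← Complex.ofReal_mul]
    exact csinh_ofReal_ne _ (mul_pos ha hy)

lemma hypInt_integrable (a : ℝ) (ha : 0 < a) (z : ℂ) (hz : |z.re| < 1 + a⁻¹) :
    Integrable (hypInt a z) (volume.restrict (Ioi 0)) := by
  have har : a * |z.re| < 1 + a := by
    calc a * |z.re| < a * (1 + a⁻¹) := by gcongr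
      _ = 1 + a := by field_simp; ring
  obtain ⟨b, hb, hb2⟩ := hypInt_bound a ‖z‖ |z.re| ha (norm_nonneg _) har
  refine hb.mono' (hypInt_meas a ha z) ?_
  filter_upwards [ae_restrict_mem measurableSet_Ioi] with y hy
  exact hb2 z le_rfl le_rfl y hy

lemma hypInt_deriv (a : ℝ) (ha : 0 < a) (z : ℂ) (hz : |z.re| < 1 + a⁻¹) :
    Integrable (hypIntD a z) (volume.restrict (Ioi 0)) ∧
    HasDerivAt (fun z => ∫ y in Ioi (0:ℝ), hypInt a z y) (∫ y in Ioi (0:ℝ), hypIntD a z y) z := by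
  obtain ⟨ε, hε, hzε⟩ : ∃ ε : ℝ, 0 < ε ∧ |z.re| + 2 * ε < 1 + a⁻¹ :=
    ⟨(1 + a⁻¹ - |z.re|) / 4, by linarith, by linarith⟩
  have har : a * (|z.re| + 2 * ε) < 1 + a := by
    calc a * (|z.re| + 2 * ε) < a * (1 + a⁻¹) := by gcongr
      _ = 1 + a := by field_simp; ring
  obtain ⟨b, hb, hb2⟩ := hypInt_bound a (‖z‖ + 2 * ε) (|z.re| + 2 * ε) ha (by positivity) har
  refine hasDerivAt_integral_of_dominated_loc_of_deriv_le (bound := fun y => b y / ε)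
    (Metric.ball_mem_nhds z hε) (Eventually.of_forall fun w => hypInt_meas a ha w)
    (hypInt_integrable a ha z hz) (hypIntD_meas a ha z) ?_ (hb.div_const ε)
    (Eventually.of_forall fun y w _ => hypInt_hasDerivAt a y w)
  filter_upwards [ae_restrict_mem measurableSet_Ioi] with y hy
  intro w hw
  rw [← (hypInt_hasDerivAt a y w).deriv]
  apply Complex.norm_deriv_le_of_forall_mem_sphere_norm_le hε
  · apply Differentiable.diffContOnCl
    exact fun w => (hypInt_hasDerivAt a y w).differentiableAt
  · intro v hv
    rw [mem_sphere_iff_norm] at hv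
    rw [Metric.mem_ball, dist_eq_norm] at hw
    have hvz : ‖v - z‖ ≤ 2 * ε := by
      have := norm_add_le (v - w) (w - z)
      rw [sub_add_sub_cancel] at this
      linarith
    apply hb2 v _ _ y hy
    · have := norm_add_le (v - z) z
      rw [sub_add_cancel] at this
      linarith
    · have h1 := Complex.abs_re_le_norm (v - z)
      have h2 := abs_add_le (v - z).re z.re
      rw [← Complex.add_re, sub_add_cancel] at h2
      linarith

/-- The kernel of the elementary integral for `log (2 cos (π w / 2))`. -/
def hypK (w : ℂ) (y : ℝ) : ℂ :=
  (1 / (y : ℂ) - Complex.cosh ((y : ℂ) * w) / Complex.sinh (y : ℂ)) / (y : ℂ)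

lemma hypK_eq (a : ℝ) (ha : 0 < a) (z : ℂ) (y : ℝ) (hy : 0 < y) :
    (hypInt a (z + 2) y - hypInt a z y) / 2 = hypK (a * (z + 1)) y := by
  unfold hypInt hypK
  have q1 := csinh_ofReal_ne y hy
  have q2 := csinh_ofReal_ne (a * y) (mul_pos ha hy)
  have q3 : (y : ℂ) ≠ 0 := by exact_mod_cast hy.ne'
  push_cast at q2
  have e1 : (a : ℂ) * y * (z + 2) = y * (a * (z + 1)) + a * y := by ring
  have e2 : (a : ℂ) * y * z = y * (a * (z + 1)) - a * y := by ring
  rw [e1, e2, Complex.sinh_add, Complex.sinh_sub]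
  generalize Complex.sinh ((a : ℂ) * y) = s at *
  field_simp
  ring

lemma hypIntD_eq (w : ℂ) (y : ℝ) (hy : 0 < y) :
    (hypIntD 1 (w + 1) y - hypIntD 1 (w - 1) y) / 2 =
      - (Complex.sinh (y * w) / Complex.sinh y) := by
  unfold hypIntD
  have q1 := csinh_ofReal_ne y hy
  have q3 : (y : ℂ) ≠ 0 := by exact_mod_cast hy.ne'
  have e1 : ((1 : ℝ) : ℂ) * y * (w + 1) = y * w + y := by push_cast; ring
  have e2 : ((1 : ℝ) : ℂ) * y * (w - 1) = y * w - y := by push_cast; ring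
  rw [e1, e2, Complex.cosh_add, Complex.cosh_sub]
  push_cast
  rw [one_mul]
  field_simp
  ring

/-- The elementary integral for `log (2 cos (π w / 2))`. -/
def hypF (w : ℂ) : ℂ := ∫ y in Ioi (0:ℝ), hypK w y

lemma hypF_eq (a : ℝ) (ha : 0 < a) (z : ℂ) (h1 : |z.re| < 1 + a⁻¹) (h2 : |(z + 2).re| < 1 + a⁻¹) :
    ((∫ y in Ioi (0:ℝ), hypInt a (z + 2) y) - ∫ y in Ioi (0:ℝ), hypInt a z y) / 2 =
      hypF (a * (z + 1)) := by
  rw [← integral_sub (hypInt_integrable a ha _ h2) (hypInt_integrable a ha _ h1),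
    ← integral_div]
  exact setIntegral_congr_fun measurableSet_Ioi fun y hy => hypK_eq a ha z y hy

lemma strip_aux {w : ℂ} (hw : |w.re| < 1) :
    |(w - 1).re| < 1 + (1:ℝ)⁻¹ ∧ |(w + 1).re| < 1 + (1:ℝ)⁻¹ := by
  rw [abs_lt] at hw
  simp only [Complex.sub_re, Complex.add_re, Complex.one_re]
  norm_num [abs_lt]
  constructor <;> constructor <;> linarith

lemma hypF_eq1 (w : ℂ) (hw : |w.re| < 1) :
    hypF w = ((∫ y in Ioi (0:ℝ), hypInt 1 (w + 1) y) - ∫ y in Ioi (0:ℝ), hypInt 1 (w - 1) y) / 2 := by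
  have h := hypF_eq 1 one_pos (w - 1) (strip_aux hw).1
    (by rw [show w - 1 + 2 = w + 1 by ring]; exact (strip_aux hw).2)
  rw [show w - 1 + 2 = w + 1 by ring] at h
  rw [h]
  simp

lemma hypF_deriv (w : ℂ) (hw : |w.re| < 1) :
    IntegrableOn (fun y : ℝ => Complex.sinh (y * w) / Complex.sinh y) (Ioi 0) ∧
    HasDerivAt hypF (- ∫ y in Ioi (0:ℝ), Complex.sinh (y * w) / Complex.sinh y) w := by
  obtain ⟨i1, d1⟩ := hypInt_deriv 1 one_pos _ (strip_aux hw).2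
  obtain ⟨i2, d2⟩ := hypInt_deriv 1 one_pos _ (strip_aux hw).1
  have hc : EqOn (fun y => (hypIntD 1 (w + 1) y - hypIntD 1 (w - 1) y) / 2)
      (fun y : ℝ => - (Complex.sinh (y * w) / Complex.sinh y)) (Ioi 0) :=
    fun y hy => hypIntD_eq w y hy
  constructor
  · have h : IntegrableOn (fun y => (hypIntD 1 (w + 1) y - hypIntD 1 (w - 1) y) / 2) (Ioi 0) :=
      (i1.sub i2).div_const 2
    simpa using (h.congr_fun hc measurableSet_Ioi).neg
  · have d := ((d1.comp_add_const w 1).sub (d2.comp_sub_const w 1)).div_const 2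
    rw [← integral_sub i1 i2, ← integral_div, setIntegral_congr_fun measurableSet_Ioi hc,
      integral_neg] at d
    refine d.congr_of_eventuallyEq ?_
    have ho : IsOpen {w : ℂ | |w.re| < 1} :=
      isOpen_lt (by fun_prop) continuous_const
    filter_upwards [ho.mem_nhds hw] with v hv
    exact hypF_eq1 v hv

lemma csinh_ratio_partial (w : ℂ) (y : ℝ) (hy : 0 < y) (N : ℕ) :
    Complex.sinh (y * w) / Complex.sinh y =
      (∑ n ∈ Finset.range N, (Complex.exp (-(2 * n + 1 - w) * y) -
        Complex.exp (-(2 * n + 1 + w) * y))) +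
      Complex.exp (-2 * N * y) * (Complex.sinh (y * w) / Complex.sinh y) := by
  induction N with
  | zero => simp
  | succ N ih =>
    rw [Finset.sum_range_succ]
    have q1 := csinh_ofReal_ne y hy
    have key : Complex.exp (-2 * N * y) * (Complex.sinh (y * w) / Complex.sinh y) =
      Complex.exp (-(2 * N + 1 - w) * y) - Complex.exp (-(2 * N + 1 + w) * y) +
      Complex.exp (-2 * (N + 1 : ℕ) * y) * (Complex.sinh (y * w) / Complex.sinh y) := by
      have e1 : Complex.exp (-(2 * N + 1 - w) * y) =
          Complex.exp (-2 * N * y) * Complex.exp (-y) * Complex.exp (y * w) := by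
        rw [← Complex.exp_add, ← Complex.exp_add]; ring_nf
      have e2 : Complex.exp (-(2 * N + 1 + w) * y) =
          Complex.exp (-2 * N * y) * Complex.exp (-y) * Complex.exp (-(y * w)) := by
        rw [← Complex.exp_add, ← Complex.exp_add]; ring_nf
      have e3 : Complex.exp (-2 * (N + 1 : ℕ) * y) =
          Complex.exp (-2 * N * y) * Complex.exp (-y) * Complex.exp (-y) := by
        rw [← Complex.exp_add, ← Complex.exp_add]; push_cast; ring_nf
      rw [e1, e2, e3]
      field_simp
      have e4 : Complex.exp y * Complex.exp (-y) = 1 := by rw [← Complex.exp_add]; simp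
      rw [Complex.sinh, Complex.sinh]
      linear_combination (-(Complex.exp (y*w) - Complex.exp (-(y*w)))/2) * e4
    linear_combination ih + key

lemma sinh_integral (w : ℂ) (hw : |w.re| < 1) :
    Tendsto (fun N : ℕ => ∑ n ∈ Finset.range N, (1 / (2 * n + 1 - w) - 1 / (2 * n + 1 + w)))
      atTop (𝓝 (∫ y in Ioi (0:ℝ), Complex.sinh (y * w) / Complex.sinh y)) := by
  have hi := (hypF_deriv w hw).1
  rw [abs_lt] at hw
  have ei : ∀ c : ℂ, 0 < c.re → IntegrableOn (fun y : ℝ => Complex.exp (-c * y)) (Ioi 0) ∧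
      ∫ y in Ioi (0:ℝ), Complex.exp (-c * y) = 1 / c := by
    intro c hc
    refine ⟨integrableOn_exp_mul_complex_Ioi (by simpa using hc) 0, ?_⟩
    rw [integral_exp_mul_complex_Ioi (by simpa using hc) 0]
    simp
  have hp1 : ∀ n : ℕ, 0 < (2 * n + 1 - w : ℂ).re := by
    intro n
    have : (0:ℝ) ≤ n := n.cast_nonneg
    simp; linarith
  have hp2 : ∀ n : ℕ, 0 < (2 * n + 1 + w : ℂ).re := by
    intro n
    have : (0:ℝ) ≤ n := n.cast_nonneg
    simp; linarith
  have hlim : Tendsto (fun N : ℕ => ∫ y in Ioi (0:ℝ),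
      Complex.exp (-2 * N * y) * (Complex.sinh (y * w) / Complex.sinh y)) atTop (𝓝 0) := by
    have h0 : (0:ℂ) = ∫ y in Ioi (0:ℝ), (0:ℂ) := by simp
    rw [h0]
    apply tendsto_integral_of_dominated_convergence
      (fun y : ℝ => ‖Complex.sinh (y * w) / Complex.sinh y‖)
    · intro N
      exact AEStronglyMeasurable.mul (by fun_prop) hi.1
    · exact hi.norm
    · intro N
      filter_upwards [ae_restrict_mem measurableSet_Ioi] with y hy
      rw [norm_mul, Complex.norm_exp]
      have : (-2 * N * y : ℂ).re = -2 * N * y := by simp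
      rw [this]
      have h3 : Real.exp (-2 * N * y) ≤ 1 := by
        rw [Real.exp_le_one_iff]
        have : (0:ℝ) ≤ N * y := mul_nonneg N.cast_nonneg (le_of_lt hy)
        nlinarith
      exact mul_le_of_le_one_left (norm_nonneg _) h3
    · filter_upwards [ae_restrict_mem measurableSet_Ioi] with y hy
      rw [← zero_mul (Complex.sinh (y * w) / Complex.sinh y)]
      apply Tendsto.mul_const
      rw [Complex.tendsto_exp_nhds_zero_iff]
      have : ∀ N : ℕ, (-2 * N * y : ℂ).re = (N:ℝ) * (-2 * y) := by intro N; simp; ring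
      simp only [this]
      exact tendsto_natCast_atTop_atTop.atTop_mul_const_of_neg (by
        have : (0:ℝ) < y := hy
        linarith)
  have heq : ∀ N : ℕ, (∑ n ∈ Finset.range N, (1 / (2 * n + 1 - w) - 1 / (2 * n + 1 + w))) =
      (∫ y in Ioi (0:ℝ), Complex.sinh (y * w) / Complex.sinh y) - ∫ y in Ioi (0:ℝ),
      Complex.exp (-2 * N * y) * (Complex.sinh (y * w) / Complex.sinh y) := by
    intro N
    have ht : ∀ n ∈ Finset.range N, IntegrableOn (fun y : ℝ =>
      (Complex.exp (-(2 * n + 1 - w) * y) - Complex.exp (-(2 * n + 1 + w) * y))) (Ioi 0) :=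
      fun n _ => (ei _ (hp1 n)).1.sub (ei _ (hp2 n)).1
    have hs : IntegrableOn (fun y : ℝ => ∑ n ∈ Finset.range N,
      (Complex.exp (-(2 * n + 1 - w) * y) - Complex.exp (-(2 * n + 1 + w) * y))) (Ioi 0) :=
      integrable_finsetSum _ ht
    have hsum : ∫ y in Ioi (0:ℝ), ∑ n ∈ Finset.range N,
      (Complex.exp (-(2 * n + 1 - w) * y) - Complex.exp (-(2 * n + 1 + w) * y)) =
      ∑ n ∈ Finset.range N, (1 / (2 * n + 1 - w) - 1 / (2 * n + 1 + w)) := by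
      rw [integral_finsetSum _ ht]
      refine Finset.sum_congr rfl fun n _ => ?_
      rw [integral_sub (ei _ (hp1 n)).1 (ei _ (hp2 n)).1, (ei _ (hp1 n)).2, (ei _ (hp2 n)).2]
    have hc : EqOn (fun y : ℝ =>
        Complex.exp (-2 * N * y) * (Complex.sinh (y * w) / Complex.sinh y))
      (fun y : ℝ => Complex.sinh (y * w) / Complex.sinh y - ∑ n ∈ Finset.range N,
      (Complex.exp (-(2 * n + 1 - w) * y) - Complex.exp (-(2 * n + 1 + w) * y))) (Ioi 0) := by
      intro y hy
      have := csinh_ratio_partial w y hy N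
      simp only
      linear_combination -this
    rw [setIntegral_congr_fun measurableSet_Ioi hc, integral_sub hi hs, hsum]
    ring
  simp only [heq]
  simpa using hlim.const_sub (∫ y in Ioi (0:ℝ), Complex.sinh (y * w) / Complex.sinh y)

lemma strip_cos_ne (w : ℂ) (hw : |w.re| < 1) : Complex.cos (Real.pi * w / 2) ≠ 0 := by
  intro h
  rw [Complex.cos_eq_zero_iff] at h
  obtain ⟨k, hk⟩ := h
  have hpi : (Real.pi : ℂ) ≠ 0 := by exact_mod_cast Real.pi_ne_zero
  have hk2 : w = ((2 * k + 1 : ℤ) : ℂ) := by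
    push_cast
    field_simp at hk
    linear_combination hk
  rw [hk2, Complex.intCast_re] at hw
  have : |2 * k + 1| < 1 := by exact_mod_cast hw
  rw [Int.abs_lt_one_iff] at this
  omega

lemma sinh_integral_eq (w : ℂ) (hw : |w.re| < 1) :
    ∫ y in Ioi (0:ℝ), Complex.sinh (y * w) / Complex.sinh y =
      Real.pi / 2 * (Complex.sin (Real.pi * w / 2) / Complex.cos (Real.pi * w / 2)) := by
  have h1 := sinh_integral w hw
  have hw' := abs_lt.1 hw
  set x : ℂ := (1 - w) / 2 with hx
  have hxre : 0 < x.re ∧ x.re < 1 := by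
    have : x.re = (1 - w.re) / 2 := by
      rw [hx]; simp
    rw [this]
    constructor <;> linarith
  have hxZ : x ∈ Complex.integerComplement := by
    rintro ⟨k, hk⟩
    rw [← hk] at hxre
    simp only [Complex.intCast_re] at hxre
    have h1 : 0 < k := by exact_mod_cast hxre.1
    have h2 : k < 1 := by exact_mod_cast hxre.2
    omega
  have hcot := tendsto_logDeriv_euler_cot_sub hxZ
  have hx0 : ∀ n : ℕ, x + n ≠ 0 := by
    intro n h
    have := congrArg Complex.re h
    simp at this
    have : (0:ℝ) ≤ n := n.cast_nonneg
    linarith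
  have hx1 : ∀ n : ℕ, x - (n + 1) ≠ 0 := by
    intro n h
    have := congrArg Complex.re h
    simp at this
    have : (0:ℝ) ≤ n := n.cast_nonneg
    linarith
  have hS : ∀ N : ℕ, ∑ n ∈ Finset.range N, (1 / (2 * n + 1 - w) - 1 / (2 * n + 1 + w)) =
      ((∑ n ∈ Finset.range N, (1 / (x - (n + 1)) + 1 / (x + (n + 1)))) + 1 / x - 1 / (x + N)) / 2 := by
    intro N
    induction N with
    | zero => simp
    | succ N ih =>
      rw [Finset.sum_range_succ, Finset.sum_range_succ, ih]
      have e1 : (2 * N + 1 - w : ℂ) = 2 * (x + N) := by rw [hx]; ring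
      have e2 : (2 * N + 1 + w : ℂ) = -2 * (x - (N + 1)) := by rw [hx]; ring
      have n1 := hx0 N
      have n2 := hx0 (N + 1)
      have n3 := hx1 N
      have n4 := hx0 0
      rw [e1, e2]
      push_cast at n2 n4 ⊢
      rw [add_zero] at n4
      simp only [one_div, mul_inv]
      ring
  have hN : Tendsto (fun N : ℕ => 1 / (x + N)) atTop (𝓝 0) := by
    simp only [one_div]
    apply tendsto_inv₀_cobounded.comp
    rw [← tendsto_norm_atTop_iff_cobounded]
    refine tendsto_atTop_mono (f := fun N : ℕ => (N:ℝ) + - ‖x‖) (fun N => ?_)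
      (tendsto_atTop_add_const_right _ _ tendsto_natCast_atTop_atTop)
    have := norm_sub_le (x + N) x
    simp at this
    linarith
  have h2 := ((hcot.add_const (1 / x)).sub hN).div_const 2
  simp only [hS] at h1
  rw [tendsto_nhds_unique h1 h2, Complex.cot]
  have e : (Real.pi : ℂ) * x = Real.pi / 2 - Real.pi * w / 2 := by rw [hx]; ring
  rw [e, Complex.cos_pi_div_two_sub, Complex.sin_pi_div_two_sub]
  ring

lemma hypF_const (w : ℂ) (hw : |w.re| < 1) :
    Complex.exp (hypF w) = Complex.exp (hypF 0) * Complex.cos (Real.pi * w / 2) := by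
  have ho : IsOpen {w : ℂ | |w.re| < 1} := isOpen_lt (by fun_prop) continuous_const
  have hconv : Convex ℝ {w : ℂ | |w.re| < 1} := by
    have : {w : ℂ | |w.re| < 1} = Complex.reLm ⁻¹' (Ioo (-1) 1) := by
      ext w; simp [abs_lt]
    rw [this]
    exact (convex_Ioo (-1:ℝ) 1).linear_preimage _
  have hd : ∀ v ∈ {w : ℂ | |w.re| < 1},
      HasDerivAt (fun w => Complex.exp (hypF w) / Complex.cos (Real.pi * w / 2)) 0 v := by
    intro v hv
    have hc := strip_cos_ne v hv
    have h1 := (hypF_deriv v hv).2.cexp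
    have h2 : HasDerivAt (fun w : ℂ => Real.pi * w / 2) (Real.pi / 2 : ℂ) v := by
      simpa using ((hasDerivAt_id v).const_mul (Real.pi : ℂ)).div_const 2
    have h3 := h1.div h2.ccos hc
    refine h3.congr_deriv ?_
    rw [sinh_integral_eq v hv]
    field_simp
    ring
  have hcst := ho.is_const_of_deriv_eq_zero hconv.isPreconnected
    (fun v hv => (hd v hv).differentiableAt.differentiableWithinAt)
    (fun v hv => (hd v hv).deriv) hw (show (0:ℂ) ∈ {w : ℂ | |w.re| < 1} by simp)
  have := strip_cos_ne w hw
  simp only [mul_zero, zero_div, Complex.cos_zero, div_one] at hcst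
  rw [← hcst]
  field_simp

lemma hypF_zero : hypF 0 = 2 * hypF (1 / 2) := by
  unfold hypF
  have h := integral_comp_mul_left_Ioi (hypK 0) 0 (b := 1 / 2) (by norm_num)
  rw [mul_zero] at h
  have h2 : ∫ y in Ioi (0:ℝ), hypK 0 y = (1 / 2 : ℝ) • ∫ y in Ioi (0:ℝ), hypK 0 (1 / 2 * y) := by
    rw [h]; simp
  rw [h2, ← integral_smul, ← integral_const_mul]
  apply setIntegral_congr_fun measurableSet_Ioi
  intro y hy
  have hy' : (0:ℝ) < y := hy
  have q1 := csinh_ofReal_ne (1 / 2 * y) (by linarith)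
  have q3 : (y : ℂ) ≠ 0 := by exact_mod_cast hy'.ne'
  have q4 : Complex.cosh ((1 / 2 * y : ℝ) : ℂ) ≠ 0 := by
    rw [← Complex.ofReal_cosh]
    exact_mod_cast (Real.cosh_pos _).ne'
  simp only [hypK, Complex.real_smul, mul_zero, Complex.cosh_zero]
  have e : Complex.sinh (y : ℂ) = 2 * Complex.sinh ((1 / 2 * y : ℝ) : ℂ) *
      Complex.cosh ((1 / 2 * y : ℝ) : ℂ) := by
    rw [← Complex.sinh_two_mul]; push_cast; ring_nf
  have e2 : (y : ℂ) * (1 / 2) = ((1 / 2 * y : ℝ) : ℂ) := by push_cast; ring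
  rw [e, e2]
  have e3 : ((1 / 2 * y : ℝ) : ℂ) = y / 2 := by push_cast; ring
  generalize Complex.sinh ((1 / 2 * y : ℝ) : ℂ) = s at *
  generalize Complex.cosh ((1 / 2 * y : ℝ) : ℂ) = c at *
  rw [e3]
  push_cast
  field_simp
  try ring

lemma hypF_exp (w : ℂ) (hw : |w.re| < 1) :
    Complex.exp (hypF w) = 2 * Complex.cos (Real.pi * w / 2) := by
  have h1 := hypF_const (1 / 2) (by norm_num [abs_lt])
  have h2 : Complex.exp (hypF 0) = Complex.exp (hypF (1 / 2)) ^ 2 := by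
    rw [hypF_zero, ← Complex.exp_nat_mul]; norm_num
  have e : (Real.pi * (1 / 2) / 2 : ℂ) = ((Real.pi / 4 : ℝ) : ℂ) := by push_cast; ring
  have hcos : Complex.cos (Real.pi * (1 / 2) / 2) ^ 2 = 1 / 2 := by
    rw [e, ← Complex.ofReal_cos, Real.cos_pi_div_four, ← Complex.ofReal_pow, div_pow,
      Real.sq_sqrt (by norm_num)]
    norm_num
  rw [h1, mul_pow, hcos] at h2
  have h3 : Complex.exp (hypF 0) = 2 := by
    have h0 := Complex.exp_ne_zero (hypF 0)
    have : Complex.exp (hypF 0) * (Complex.exp (hypF 0) - 2) = 0 := by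
      linear_combination -2 * h2
    rcases mul_eq_zero.1 this with h | h
    · exact absurd h h0
    · linear_combination h
  rw [hypF_const w hw, h3]

/-- The strip function with the positive parameter `a = -τ`. -/
def gS (a : ℝ) (z : ℂ) : ℂ := Complex.exp ((∫ y in Ioi (0:ℝ), hypInt a z y) / 2)

lemma gS_eq (a : ℝ) (z : ℂ) : hypGammaStrip (-a) z = gS a z := by
  unfold hypGammaStrip hypGammaArg gS
  simp only [hypInt_neg]
  congr 1
  have := Complex.I_ne_zero
  field_simp

lemma gS_ne (a : ℝ) (z : ℂ) : gS a z ≠ 0 := Complex.exp_ne_zero _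

lemma gS_neg (a : ℝ) (z : ℂ) : gS a (-z) = (gS a z)⁻¹ := by
  unfold gS
  have : ∀ y, hypInt a (-z) y = - hypInt a z y := by
    intro y
    unfold hypInt
    rw [mul_neg, Complex.sinh_neg]
    ring
  simp only [this]
  rw [integral_neg, neg_div, Complex.exp_neg]

lemma gS_diff (a : ℝ) (ha : 0 < a) (z : ℂ) (hz : |z.re| < 1 + a⁻¹) :
    DifferentiableAt ℂ (gS a) z :=
  ((hypInt_deriv a ha z hz).2.differentiableAt.div_const 2).cexp

/-- The multiplier in the functional equation. -/
def gC (a : ℝ) (z : ℂ) : ℂ := 2 * Complex.cos (Real.pi * (a * (z + 1)) / 2)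

lemma gS_step (a : ℝ) (ha : 0 < a) (z : ℂ) (h1 : |z.re| < 1 + a⁻¹)
    (h2 : |(z + 2).re| < 1 + a⁻¹) : gS a (z + 2) = gC a z * gS a z := by
  have hw : |((a : ℂ) * (z + 1)).re| < 1 := by
    rw [Complex.re_ofReal_mul, abs_mul, abs_of_pos ha]
    have : |(z + 1).re| < a⁻¹ := by
      rw [abs_lt] at *
      simp at *
      constructor <;> linarith
    calc a * |(z+1).re| < a * a⁻¹ := by gcongr
      _ = 1 := mul_inv_cancel₀ ha.ne'
  unfold gC
  rw [← hypF_exp _ hw, ← hypF_eq a ha z h1 h2]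
  unfold gS
  rw [← Complex.exp_add]
  ring_nf

/-- Finite product of multipliers. -/
def gP (a : ℝ) (n : ℕ) (z : ℂ) : ℂ := ∏ j ∈ Finset.range n, gC a (z - 2 * (j + 1))

/-- The continuation to the right half plane. -/
def gE (a : ℝ) (z : ℂ) : ℂ :=
  gS a (z - 2 * (⌊(z.re + 1) / 2⌋.toNat : ℕ)) * gP a ⌊(z.re + 1) / 2⌋.toNat z

lemma gE_aux (a : ℝ) (ha : 0 < a) (z : ℂ) (m m' : ℕ) (hmm : m ≤ m')
    (h1 : |z.re - 2 * m| < 1 + a⁻¹) : |z.re - 2 * m'| < 1 + a⁻¹ →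
    gS a (z - 2 * m') * gP a m' z = gS a (z - 2 * m) * gP a m z := by
  induction m', hmm using Nat.le_induction with
  | base => intro _; rfl
  | succ k hk ih =>
    intro h2
    have hk' : (m : ℝ) ≤ k := by exact_mod_cast hk
    have h3 : |z.re - 2 * k| < 1 + a⁻¹ := by
      rw [abs_lt] at *
      push_cast at h2
      constructor <;> linarith
    rw [← ih h3]
    have e : z - 2 * (k : ℂ) = (z - 2 * (k + 1 : ℕ)) + 2 := by push_cast; ring
    rw [e, gS_step a ha]
    · unfold gP
      rw [Finset.prod_range_succ]
      push_cast
      ring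
    · simpa using h2
    · rw [← e]; simpa using h3

lemma gE_n (a : ℝ) (ha : 0 < a) (z : ℂ) (hz : -(1 + a⁻¹) < z.re) :
    |z.re - 2 * (⌊(z.re + 1) / 2⌋.toNat : ℕ)| < 1 + a⁻¹ ∧
    z.re - 2 * (⌊(z.re + 1) / 2⌋.toNat : ℕ) < 1 ∧
    (⌊(z.re + 1) / 2⌋.toNat ≠ 0 → -1 ≤ z.re - 2 * (⌊(z.re + 1) / 2⌋.toNat : ℕ)) := by
  have hi : 0 < a⁻¹ := inv_pos.2 ha
  set f := ⌊(z.re + 1) / 2⌋ with hf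
  have h1 : (f : ℝ) ≤ (z.re + 1) / 2 := Int.floor_le _
  have h2 : (z.re + 1) / 2 < f + 1 := Int.lt_floor_add_one _
  rcases le_or_gt 0 f with h | h
  · have e : ((f.toNat : ℕ) : ℝ) = (f : ℝ) := by
      exact_mod_cast congrArg (Int.cast : ℤ → ℝ) (Int.toNat_of_nonneg h)
    rw [e, abs_lt]
    refine ⟨⟨?_, ?_⟩, ?_, ?_⟩
    · linarith
    · linarith
    · linarith
    · intro _; linarith
  · have e : f.toNat = 0 := Int.toNat_of_nonpos h.le
    have h' : (f : ℝ) + 1 ≤ 0 := by exact_mod_cast h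
    rw [e, abs_lt]
    simp
    refine ⟨⟨?_, ?_⟩, ?_⟩ <;> linarith

lemma gE_eq (a : ℝ) (ha : 0 < a) (z : ℂ) (m : ℕ) (hm : |z.re - 2 * m| < 1 + a⁻¹) :
    gE a z = gS a (z - 2 * m) * gP a m z := by
  have hz : -(1 + a⁻¹) < z.re := by
    have : (0:ℝ) ≤ m := m.cast_nonneg
    rw [abs_lt] at hm
    linarith
  have hn := (gE_n a ha z hz).1
  unfold gE
  rcases le_total m ⌊(z.re + 1) / 2⌋.toNat with h | h
  · exact gE_aux a ha z _ _ h hm hn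
  · exact (gE_aux a ha z _ _ h hn hm).symm

lemma isOpen_H (a : ℝ) : IsOpen {z : ℂ | -(1 + a⁻¹) < z.re} :=
  isOpen_lt continuous_const (by fun_prop)

lemma gE_diff (a : ℝ) (ha : 0 < a) (z : ℂ) (hz : -(1 + a⁻¹) < z.re) :
    DifferentiableAt ℂ (gE a) z := by
  have hn := (gE_n a ha z hz).1
  set m := ⌊(z.re + 1) / 2⌋.toNat
  have ho : IsOpen {w : ℂ | |w.re - 2 * m| < 1 + a⁻¹} := isOpen_lt (by fun_prop) continuous_const
  have : gE a =ᶠ[𝓝 z] fun w => gS a (w - 2 * m) * gP a m w := by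
    filter_upwards [ho.mem_nhds hn] with w hw
    exact gE_eq a ha w m hw
  refine DifferentiableAt.congr_of_eventuallyEq ?_ this
  apply DifferentiableAt.mul
  · have hg : DifferentiableAt ℂ (gS a) (z - 2 * m) := gS_diff a ha _ (by simpa using hn)
    exact DifferentiableAt.comp (g := gS a) (f := fun w : ℂ => w - 2 * m) z hg (by fun_prop)
  · unfold gP gC
    fun_prop

lemma gE_analytic (a : ℝ) (ha : 0 < a) (z : ℂ) (hz : -(1 + a⁻¹) < z.re) :
    AnalyticAt ℂ (gE a) z := by
  rw [Complex.analyticAt_iff_eventually_differentiableAt]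
  filter_upwards [(isOpen_H a).mem_nhds hz] with w hw
  exact gE_diff a ha w hw

lemma gE_step (a : ℝ) (ha : 0 < a) (z : ℂ) (hz : -(1 + a⁻¹) < z.re) :
    gE a (z + 2) = gC a z * gE a z := by
  have hn := (gE_n a ha z hz).1
  set m := ⌊(z.re + 1) / 2⌋.toNat
  rw [gE_eq a ha z m hn, gE_eq a ha (z + 2) (m + 1)]
  · unfold gP
    rw [Finset.prod_range_succ']
    have e : z + 2 - 2 * ((m + 1 : ℕ) : ℂ) = z - 2 * m := by push_cast; ring
    have e2 : ∀ j : ℕ, z + 2 - 2 * (((j + 1 : ℕ) : ℂ) + 1) = z - 2 * (j + 1) := by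
      intro j; push_cast; ring
    have e3 : z + 2 - 2 * (((0 : ℕ) : ℂ) + 1) = z := by push_cast; ring
    rw [e, e3]
    simp only [e2]
    ring
  · have e : (z + 2).re - 2 * ((m + 1 : ℕ) : ℝ) = z.re - 2 * m := by simp; ring
    rw [e]; exact hn

lemma gE_inv (a : ℝ) (ha : 0 < a) (z : ℂ) (hz : |z.re| < 1 + a⁻¹) :
    gE a (-z) = (gE a z)⁻¹ := by
  rw [gE_eq a ha z 0 (by simpa using hz), gE_eq a ha (-z) 0 (by simpa using hz)]
  simp [gP, gS_neg]

lemma hypZeros_iff (a : ℝ) (z : ℂ) :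
    z ∈ hypZeros (-a) ↔ ∃ k l : ℕ, z = ((1 + a⁻¹ + 2 * k + 2 * a⁻¹ * l : ℝ) : ℂ) := by
  constructor
  · rintro ⟨k, l, hk, hl, rfl⟩
    obtain ⟨k, rfl⟩ := Int.eq_ofNat_of_zero_le hk
    obtain ⟨l', hl'⟩ := Int.eq_ofNat_of_zero_le (neg_nonneg.2 hl)
    obtain rfl : l = -(l' : ℤ) := by omega
    refine ⟨k, l', ?_⟩
    push_cast
    rw [inv_neg]
    ring
  · rintro ⟨k, l, rfl⟩
    refine ⟨k, -l, by omega, by omega, ?_⟩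
    push_cast
    rw [inv_neg]
    ring

lemma hypPoles_iff (a : ℝ) (z : ℂ) : z ∈ hypPoles (-a) ↔ -z ∈ hypZeros (-a) := by
  constructor
  · rintro ⟨k, l, hk, hl, rfl⟩
    exact ⟨-k, -l, by omega, by omega, by push_cast; ring⟩
  · rintro ⟨k, l, hk, hl, h⟩
    refine ⟨-k, -l, by omega, by omega, ?_⟩
    rw [← neg_neg z, h]
    push_cast; ring

lemma hypZeros_re (a : ℝ) (ha : 0 < a) (z : ℂ) (hz : z ∈ hypZeros (-a)) :
    1 + a⁻¹ ≤ z.re ∧ z.im = 0 := by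
  obtain ⟨k, l, rfl⟩ := (hypZeros_iff a z).1 hz
  have hi : 0 < a⁻¹ := inv_pos.2 ha
  rw [Complex.ofReal_re, Complex.ofReal_im]
  refine ⟨?_, rfl⟩
  have : (0:ℝ) ≤ 2 * k + 2 * a⁻¹ * l := by positivity
  linarith

lemma gC_zero (a : ℝ) (ha : 0 < a) (z : ℂ) :
    gC a z = 0 ↔ ∃ q : ℤ, z = ((-1 + (2 * q + 1) * a⁻¹ : ℝ) : ℂ) := by
  unfold gC
  have hpi : (Real.pi : ℂ) ≠ 0 := by exact_mod_cast Real.pi_ne_zero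
  have ha' : (a : ℂ) ≠ 0 := by exact_mod_cast ha.ne'
  rw [mul_eq_zero, or_iff_right two_ne_zero, Complex.cos_eq_zero_iff]
  refine exists_congr fun q => ?_
  push_cast
  constructor
  · intro h
    field_simp at h ⊢
    linear_combination h
  · rintro rfl
    field_simp
    ring

lemma gE_zero (a : ℝ) (ha : 0 < a) (z : ℂ) (hz : -(1 + a⁻¹) < z.re) :
    gE a z = 0 ↔ z ∈ hypZeros (-a) := by
  have hi : 0 < a⁻¹ := inv_pos.2 ha
  obtain ⟨hn, hn1, hn2⟩ := gE_n a ha z hz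
  set m := ⌊(z.re + 1) / 2⌋.toNat
  rw [gE_eq a ha z m hn, mul_eq_zero, or_iff_right (gS_ne _ _), hypZeros_iff, gP,
    Finset.prod_eq_zero_iff]
  constructor
  · rintro ⟨j, hj, h⟩
    rw [Finset.mem_range] at hj
    obtain ⟨q, hq⟩ := (gC_zero a ha _).1 h
    have hq0 : 0 ≤ q := by
      have h1 := congrArg Complex.re hq
      rw [Complex.ofReal_re] at h1
      simp at h1
      have h2 := hn2 (by omega)
      have h3 : (j : ℝ) + 1 ≤ m := by exact_mod_cast hj
      have h4 : 0 ≤ (2 * q + 1 : ℝ) * a⁻¹ := by linarith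
      have h5 : (0:ℝ) ≤ 2 * q + 1 := nonneg_of_mul_nonneg_left h4 hi
      have h6 : 0 ≤ 2 * q + 1 := by exact_mod_cast h5
      omega
    obtain ⟨l, rfl⟩ := Int.eq_ofNat_of_zero_le hq0
    refine ⟨j, l, ?_⟩
    push_cast at hq ⊢
    linear_combination hq
  · rintro ⟨k, l, h⟩
    refine ⟨k, ?_, (gC_zero a ha _).2 ⟨l, ?_⟩⟩
    · rw [Finset.mem_range]
      rw [h, Complex.ofReal_re] at hn1
      have : (0:ℝ) ≤ 2 * a⁻¹ * l := by positivity
      have h7 : (k : ℝ) < m := by linarith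
      exact_mod_cast h7
    · rw [h]; push_cast; ring

/-- The meromorphic continuation. -/
def gG (a : ℝ) (z : ℂ) : ℂ := if -1 < z.re then gE a z else (gE a (-z))⁻¹

lemma gG_right (a : ℝ) (ha : 0 < a) (z : ℂ) (hz : -(1 + a⁻¹) < z.re) : gG a z = gE a z := by
  have hi : 0 < a⁻¹ := inv_pos.2 ha
  unfold gG
  split_ifs with h
  · rfl
  · rw [gE_inv a ha z (abs_lt.2 ⟨hz, by linarith⟩), inv_inv]

lemma gG_left (a : ℝ) (ha : 0 < a) (z : ℂ) (hz : z.re < 1 + a⁻¹) : gG a z = (gE a (-z))⁻¹ := by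
  have hi : 0 < a⁻¹ := inv_pos.2 ha
  unfold gG
  split_ifs with h
  · rw [gE_inv a ha z (abs_lt.2 ⟨by linarith, hz⟩), inv_inv]
  · rfl

lemma gG_right_ev (a : ℝ) (ha : 0 < a) (z : ℂ) (hz : -(1 + a⁻¹) < z.re) : gG a =ᶠ[𝓝 z] gE a := by
  filter_upwards [(isOpen_H a).mem_nhds hz] with w hw
  exact gG_right a ha w hw

lemma gG_left_ev (a : ℝ) (ha : 0 < a) (z : ℂ) (hz : z.re < 1 + a⁻¹) :
    gG a =ᶠ[𝓝 z] (fun w => gE a (-w))⁻¹ := by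
  have ho : IsOpen {z : ℂ | z.re < 1 + a⁻¹} := isOpen_lt (by fun_prop) continuous_const
  filter_upwards [ho.mem_nhds hz] with w hw
  exact gG_left a ha w hw

lemma gE_neg_analytic (a : ℝ) (ha : 0 < a) (z : ℂ) (hz : z.re < 1 + a⁻¹) :
    AnalyticAt ℂ (fun w => gE a (-w)) z :=
  AnalyticAt.fun_comp (gE_analytic a ha (-z) (by simpa using neg_lt_neg hz)) analyticAt_id.neg

/-- The hyperbolic gamma function extends to a meromorphic function on `ℂ`,
satisfying `G_τ(z+2) = 2cos(π(z+1)τ/2)·G_τ(z)` (away from its poles), whose zeros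
are exactly the points `1 − τ⁻¹ + 2ℤ_{≥0} + 2τ⁻¹ℤ_{≤0}` and whose poles are exactly
the points `−1 + τ⁻¹ + 2ℤ_{≤0} + 2τ⁻¹ℤ_{≥0}`. -/
theorem hyperbolic_gamma_meromorphic_continuation (τ : ℝ) (hτ : τ < 0) :
    ∃ G : ℂ → ℂ,
      (∀ z : ℂ, |z.re| < 1 - τ⁻¹ → G z = hypGammaStrip τ z) ∧
      (∀ z : ℂ, z ∉ hypPoles τ →
        G (z + 2) = 2 * Complex.cos ((Real.pi : ℂ) * (z + 1) * (τ : ℂ) / 2) * G z) ∧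
      MeromorphicOn G Set.univ ∧
      (∀ z : ℂ, z ∉ hypPoles τ → AnalyticAt ℂ G z) ∧
      (∀ z ∈ hypPoles τ, Tendsto (fun w => ‖G w‖) (𝓝[≠] z) atTop) ∧
      (∀ z : ℂ, z ∉ hypPoles τ → (G z = 0 ↔ z ∈ hypZeros τ)) := by
  obtain ⟨a, rfl⟩ : ∃ a : ℝ, τ = -a := ⟨-τ, by ring⟩
  have ha : 0 < a := by linarith
  have hi : 0 < a⁻¹ := inv_pos.2 ha
  have hdich : ∀ z : ℂ, -(1 + a⁻¹) < z.re ∨ z.re < 1 + a⁻¹ := by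
    intro z
    by_cases h : -(1 + a⁻¹) < z.re
    · exact Or.inl h
    · exact Or.inr (by linarith)
  refine ⟨gG a, ?_, ?_, ?_, ?_, ?_, ?_⟩
  · intro z hz
    rw [inv_neg, sub_neg_eq_add] at hz
    rw [gG_right a ha z (abs_lt.1 hz).1, gS_eq, gE_eq a ha z 0 (by simpa using hz)]
    simp [gP]
  · intro z hz
    have hC : 2 * Complex.cos ((Real.pi : ℂ) * (z + 1) * ((-a : ℝ) : ℂ) / 2) = gC a z := by
      unfold gC
      rw [← Complex.cos_neg]
      push_cast
      ring_nf
    rw [hC]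
    by_cases h : -(1 + a⁻¹) < z.re
    · rw [gG_right a ha z h, gG_right a ha (z + 2) (by simp; linarith), gE_step a ha z h]
    · rw [not_lt] at h
      rw [gG_left a ha z (by linarith), gG_left a ha (z + 2) (by simp; linarith)]
      have hs := gE_step a ha (-(z + 2)) (by simp; linarith)
      rw [show -(z + 2) + 2 = -z by ring] at hs
      have hC2 : gC a (-(z + 2)) = gC a z := by
        unfold gC
        rw [← Complex.cos_neg]
        ring_nf
      rw [hC2] at hs
      have hne : gE a (-z) ≠ 0 := by
        rw [Ne, gE_zero a ha (-z) (by simp; linarith), ← hypPoles_iff]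
        exact hz
      rw [hs] at hne ⊢
      have h1 := left_ne_zero_of_mul hne
      rw [mul_inv, mul_inv_cancel_left₀ h1]
  · intro z _
    rcases hdich z with h | h
    · exact (gE_analytic a ha z h).meromorphicAt.congr
        ((gG_right_ev a ha z h).symm.filter_mono nhdsWithin_le_nhds)
    · exact (gE_neg_analytic a ha z h).meromorphicAt.inv.congr
        ((gG_left_ev a ha z h).symm.filter_mono nhdsWithin_le_nhds)
  · intro z hz
    by_cases h : -(1 + a⁻¹) < z.re
    · exact (gE_analytic a ha z h).congr (gG_right_ev a ha z h).symm
    · have h' : z.re < 1 + a⁻¹ := by linarith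
      refine ((gE_neg_analytic a ha z h').inv ?_).congr (gG_left_ev a ha z h').symm
      rw [Ne, gE_zero a ha (-z) (by simp; linarith), ← hypPoles_iff]
      exact hz
  · intro z hz
    rw [hypPoles_iff] at hz
    obtain ⟨hre, him⟩ := hypZeros_re a ha _ hz
    rw [Complex.neg_re] at hre
    have h' : z.re < 1 + a⁻¹ := by linarith
    have hA := gE_neg_analytic a ha z h'
    have h0 : gE a (-z) = 0 := (gE_zero a ha (-z) (by simp; linarith)).2 hz
    have hne : ∀ᶠ w in 𝓝[≠] z, gE a (-w) ≠ 0 := by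
      rcases hA.eventually_eq_zero_or_eventually_ne_zero with h | h
      · exfalso
        have ho : IsOpen {z : ℂ | z.re < 1 + a⁻¹} := isOpen_lt (by fun_prop) continuous_const
        have hev := h.and (ho.mem_nhds h')
        have ht : Tendsto (fun t : ℝ => z + t * Complex.I) (𝓝[>] 0) (𝓝 z) := by
          have hc : Continuous (fun t : ℝ => z + t * Complex.I) := by fun_prop
          have := hc.tendsto 0
          simp only [Complex.ofReal_zero, zero_mul, add_zero] at this
          exact this.mono_left nhdsWithin_le_nhds
        obtain ⟨t, ⟨ht1, ht2⟩, ht0⟩ := ((ht.eventually hev).and self_mem_nhdsWithin).exists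
        have ht2' : (z + t * Complex.I).re < 1 + a⁻¹ := ht2
        have hz2 := (gE_zero a ha _ (by rw [Complex.neg_re]; linarith)).1 ht1
        have := (hypZeros_re a ha _ hz2).2
        have ht0' : (0:ℝ) < t := ht0
        simp at this him
        linarith
      · exact h
    have hlim : Tendsto (fun w => ‖gE a (-w)‖) (𝓝[≠] z) (𝓝[>] 0) := by
      rw [tendsto_nhdsWithin_iff]
      constructor
      · have := hA.continuousAt.norm.tendsto
        simp only [h0, norm_zero] at this
        exact this.mono_left nhdsWithin_le_nhds
      · filter_upwards [hne] with w hw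
        exact norm_pos_iff.2 hw
    refine (tendsto_inv_nhdsGT_zero.comp hlim).congr' ?_
    filter_upwards [(gG_left_ev a ha z h').filter_mono nhdsWithin_le_nhds] with w hw
    rw [hw]
    simp
  · intro z hz
    by_cases h : -(1 + a⁻¹) < z.re
    · rw [gG_right a ha z h, gE_zero a ha z h]
    · have hne : gE a (-z) ≠ 0 := by
        rw [Ne, gE_zero a ha (-z) (by simp; linarith), ← hypPoles_iff]
        exact hz
      rw [gG_left a ha z (by linarith)]
      constructor
      · intro h2
        exact absurd h2 (inv_ne_zero hne)
      · intro h2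
        have := (hypZeros_re a ha z h2).1
        linarith
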